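/- Assume 0 < γ ≤ 1 (and γ < p), let u be a local minimizer of J on Ω, and let Ω' ⊆ Ω with dist(Ω', ∂Ω) > 0. Assume the growth property: there exist ρ₀ > 0 and C₂ > 0 such that |u(x)| ≤ C₂ · dist(x, Γ_0(u))^{1+τ} for every x ∈ Ω with dist(x, Γ_0(u)) < ρ₀. Then the N-dimensional Lebesgue measure of the full free boundary Γ(u) ∩ Ω' is zero: 𝓛^N(Γ(u) ∩ Ω') = 0. -/

import Mathlib

open MeasureTheory Metric Set
open scoped InnerProductSpace

/-- The Alt–Phillips potential `F_γ(t) = λ₊ (t₊)^γ + λ₋ (t₋)^γ`. -/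
noncomputable def Fgam (γ lp lm : ℝ) (t : ℝ) : ℝ :=
  lp * (max t 0) ^ γ + lm * (max (-t) 0) ^ γ

/-- `u` is a `C¹(Ω)` function with `∫_Ω ‖∇u‖^p < ∞` which is a local minimizer of the
functional with density `‖∇v‖^p/p + F(v)`, with respect to Lipschitz competitors on
balls compactly contained in `Ω` agreeing with `u` on the boundary sphere. -/
def APLocMin (N : ℕ) (p : ℝ) (F : ℝ → ℝ) (Ω : Set (EuclideanSpace ℝ (Fin N)))
    (u : EuclideanSpace ℝ (Fin N) → ℝ) : Prop :=
  (∀ x ∈ Ω, DifferentiableAt ℝ u x) ∧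
  ContinuousOn (fun x => gradient u x) Ω ∧
  IntegrableOn (fun x => ‖gradient u x‖ ^ p) Ω volume ∧
  ∀ (z : EuclideanSpace ℝ (Fin N)) (r : ℝ), 0 < r → closure (Metric.ball z r) ⊆ Ω →
    ∀ (v : EuclideanSpace ℝ (Fin N) → ℝ) (K : NNReal),
      LipschitzOnWith K v (closure (Metric.ball z r)) →
      Set.EqOn v u (Metric.sphere z r) →
      (∫ x in Metric.ball z r, (‖gradient u x‖ ^ p / p + F (u x))) ≤
        ∫ x in Metric.ball z r, (‖gradient v x‖ ^ p / p + F (v x))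

/-- The free boundary `Γ(u) = (∂{u>0} ∪ ∂{u<0}) ∩ Ω`. -/
def apFB (N : ℕ) (Ω : Set (EuclideanSpace ℝ (Fin N)))
    (u : EuclideanSpace ℝ (Fin N) → ℝ) : Set (EuclideanSpace ℝ (Fin N)) :=
  (frontier {x ∈ Ω | 0 < u x} ∪ frontier {x ∈ Ω | u x < 0}) ∩ Ω

/-- The zero-gradient part of the free boundary `Γ₀(u) = Γ(u) ∩ {∇u = 0}`. -/
def apFB0 (N : ℕ) (Ω : Set (EuclideanSpace ℝ (Fin N)))
    (u : EuclideanSpace ℝ (Fin N) → ℝ) : Set (EuclideanSpace ℝ (Fin N)) :=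
  apFB N Ω u ∩ {x | gradient u x = 0}

/-!
A set that is porous at each of its points has no density points, hence is null by Lebesgue's
density theorem; so it suffices to show that the two parts of the free boundary are porous.

Near a point with `∇u ≠ 0` the free boundary lies in a level set of `u`, which misses a cone around
the gradient direction.

On the singular part, porosity follows from the growth bound together with nondegeneracy: if
`u z ≠ 0`, then `|u|` exceeds `c r^(1+τ)` somewhere on `closedBall z r`. Indeed, suppose `u ≤ M` on
this ball with `M` too small, and put `P y = A |y - z|^q`, where `1/p + 1/q = 1` and `A r^q = M`.
The `p`-Laplacian of `P` is the constant `N (A q)^(p-1)`. Since `γ ≤ 1`, the slope of `F_γ` on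
`(0, M]` is at least `λ₊ γ M^(γ-1)`, which is larger than that constant, so replacing `u` by
`min u P` lowers the energy unless `u ≤ P`. Hence `u z ≤ P z = 0`, and the same argument for `-u`
gives `u z = 0`.
-/

open Filter Module
open scoped Topology

lemma exists_pos_mul_rpow_lt (a : ℝ) {b s : ℝ} (hb : 0 < b) (hs : 0 < s) :
    ∃ t > 0, a * t ^ s < b := by
  have hlim : Tendsto (fun t : ℝ => a * t ^ s) (𝓝[>] 0) (𝓝 0) := by
    have hcont : ContinuousAt (fun t : ℝ => a * t ^ s) 0 := by fun_prop (disch := simp [hs.le])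
    simpa [Real.zero_rpow hs.ne'] using hcont.tendsto.mono_left nhdsWithin_le_nhds
  obtain ⟨t, hlt, ht⟩ := ((hlim.eventually_lt_const hb).and self_mem_nhdsWithin).exists
  exact ⟨t, ht, hlt⟩

section Porosity

variable {X : Type*} [PseudoMetricSpace X] {S T : Set X} {x : X}

/-- Porosity of `S` at `x`: at arbitrarily small scales `r`, within distance `r` of `x` there is
the centre of a ball of radius comparable to `r` that misses `S`. -/
def IsPorousAt (S : Set X) (x : X) : Prop :=
  ∃ η > 0, ∃ᶠ r in 𝓝[>] (0 : ℝ), ∃ y ∈ closedBall x r, Disjoint (ball y (η * r)) S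

lemma IsPorousAt.mono (hT : IsPorousAt T x) (hST : S ⊆ T) : IsPorousAt S x := by
  obtain ⟨η, hη, hfreq⟩ := hT
  exact ⟨η, hη, hfreq.mono fun r ⟨y, hy, hdisj⟩ => ⟨y, hy, hdisj.mono_right hST⟩⟩

lemma isPorousAt_of_growth_of_nondegenerate {u : X → ℝ} {β c C : ℝ} (hβ : 0 < β) (hc : 0 < c)
    (hC : 0 ≤ C) (hgrowth : ∀ᶠ y in 𝓝 x, |u y| ≤ C * infDist y S ^ β)
    (hnondeg : ∀ᶠ r in 𝓝[>] (0 : ℝ), ∃ y ∈ closedBall x r, c * r ^ β < |u y|) :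
    IsPorousAt S x := by
  obtain ⟨η, hη, hηc⟩ := exists_pos_mul_rpow_lt C hc hβ
  obtain ⟨ε, hε, hgrowth⟩ := eventually_nhds_iff_ball.1 hgrowth
  refine ⟨η, hη, Eventually.frequently ?_⟩
  filter_upwards [hnondeg, Ioo_mem_nhdsGT hε] with r ⟨y, hy, hlarge⟩ ⟨hr, hrε⟩
  have hfar : η * r ≤ infDist y S := by
    by_contra! hnear
    have : c * r ^ β < c * r ^ β :=
      calc c * r ^ β < |u y| := hlarge
        _ ≤ C * infDist y S ^ β := hgrowth y (closedBall_subset_ball hrε hy)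
        _ ≤ C * (η * r) ^ β := by gcongr; exact infDist_nonneg
        _ = C * η ^ β * r ^ β := by rw [Real.mul_rpow hη.le hr.le, mul_assoc]
        _ ≤ c * r ^ β := by gcongr
    exact this.false
  exact ⟨y, hy, disjoint_ball_infDist.mono_left (ball_subset_ball hfar)⟩

end Porosity

section PorousMeasure

variable {E : Type*} [NormedAddCommGroup E] [NormedSpace ℝ E]

lemma exists_norm_le_one_apply_pos {f : E →L[ℝ] ℝ} (hf : f ≠ 0) : ∃ e, ‖e‖ ≤ 1 ∧ 0 < f e := by
  obtain ⟨v, hv⟩ : ∃ v, f v ≠ 0 := by simpa [ContinuousLinearMap.ext_iff] using hf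
  have hv0 : 0 < ‖v‖ := norm_pos_iff.2 fun h => hv (by simp [h])
  rcases hv.lt_or_gt with hneg | hpos
  · refine ⟨-(‖v‖⁻¹ • v), by simp [norm_smul, hv0.ne'], ?_⟩
    rw [map_neg, map_smul, smul_eq_mul]
    exact neg_pos.2 (mul_neg_of_pos_of_neg (inv_pos.2 hv0) hneg)
  · refine ⟨‖v‖⁻¹ • v, by simp [norm_smul, hv0.ne'], ?_⟩
    rw [map_smul, smul_eq_mul]
    positivity

lemma exists_cone_mul_norm_lt_apply {f : E →L[ℝ] ℝ} (hf : f ≠ 0) :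
    ∃ e, ‖e‖ ≤ 1 ∧ ∃ a > 0, ∃ η > 0, ∀ r > 0, ∀ v ∈ ball (r • e) (η * r), a * ‖v‖ < f v := by
  obtain ⟨e, he, hfe⟩ := exists_norm_le_one_apply_pos hf
  have hcont : Continuous fun w => f w - f e / 2 * ‖w‖ := by fun_prop
  have hpos : 0 < f e - f e / 2 * ‖e‖ := by nlinarith
  obtain ⟨η, hη, hball⟩ := eventually_nhds_iff_ball.1 (hcont.continuousAt.eventually_const_lt hpos)
  refine ⟨e, he, f e / 2, half_pos hfe, η, hη, fun r hr v hv => ?_⟩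
  have hw : r⁻¹ • v ∈ ball e η := by
    rw [mem_ball_iff_norm] at hv ⊢
    rw [show r⁻¹ • v - e = r⁻¹ • (v - r • e) by rw [smul_sub, inv_smul_smul₀ hr.ne'], norm_smul,
      norm_inv, Real.norm_of_nonneg hr.le, inv_mul_lt_iff₀ hr, mul_comm]
    exact hv
  have hscaled := hball _ hw
  rw [map_smul, norm_smul, norm_inv, Real.norm_of_nonneg hr.le, smul_eq_mul, mul_left_comm,
    ← mul_sub] at hscaled
  exact sub_pos.1 ((pos_iff_pos_of_mul_pos hscaled).1 (inv_pos.2 hr))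

lemma isPorousAt_levelSet_of_hasFDerivAt {f : E → ℝ} {f' : E →L[ℝ] ℝ} {x : E}
    (hf : HasFDerivAt f f' x) (hf' : f' ≠ 0) : IsPorousAt {y | f y = f x} x := by
  obtain ⟨e, he, a, ha, η, hη, hcone⟩ := exists_cone_mul_norm_lt_apply hf'
  obtain ⟨δ, hδ, happrox⟩ := eventually_nhds_iff_ball.1 (hf.isLittleO.def ha)
  refine ⟨η, hη, Eventually.frequently ?_⟩
  filter_upwards [Ioo_mem_nhdsGT (show 0 < δ / (1 + η) by positivity)] with r ⟨hr, hrδ⟩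
  have hre : ‖r • e‖ ≤ r := by
    rw [norm_smul, Real.norm_of_nonneg hr.le]
    exact mul_le_of_le_one_right hr.le he
  refine ⟨x + r • e, by simpa [mem_closedBall_iff_norm] using hre, ?_⟩
  refine Set.disjoint_left.2 fun y hy (hyx : f y = f x) => ?_
  have hy' : y - x ∈ ball (r • e) (η * r) := by
    rwa [mem_ball_iff_norm, sub_sub, ← mem_ball_iff_norm]
  have hyδ : y ∈ ball x δ := by
    rw [lt_div_iff₀ (by positivity)] at hrδ
    rw [mem_ball_iff_norm] at hy' ⊢
    linarith [norm_le_norm_add_norm_sub' (y - x) (r • e)]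
  have hle : f' (y - x) ≤ a * ‖y - x‖ :=
    calc f' (y - x) ≤ ‖f y - f x - f' (y - x)‖ := by
          rw [hyx, sub_self, zero_sub, norm_neg]
          exact le_abs_self _
      _ ≤ a * ‖y - x‖ := happrox y hyδ
  exact (hcone r hr _ hy').not_ge hle

variable [FiniteDimensional ℝ E] [MeasurableSpace E] [BorelSpace E]
  (μ : Measure E) [μ.IsAddHaarMeasure]

lemma measure_inter_closedBall_div_le {S : Set E} {x y : E} {η r : ℝ} (hη : 0 < η) (hη1 : η ≤ 1)
    (hr : 0 < r) (hy : y ∈ closedBall x r) (hdisj : Disjoint (ball y (η * r)) S) :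
    μ (S ∩ closedBall x (2 * r)) / μ (closedBall x (2 * r)) ≤
      1 - ENNReal.ofReal ((η / 2) ^ finrank ℝ E) := by
  have hsub : ball y (η * r) ⊆ closedBall x (2 * r) :=
    ball_subset_closedBall.trans <| closedBall_subset_closedBall' <| by
      nlinarith [mem_closedBall.1 hy]
  have hratio : μ (ball y (η * r)) =
      ENNReal.ofReal ((η / 2) ^ finrank ℝ E) * μ (closedBall x (2 * r)) := by
    rw [Measure.addHaar_ball_of_pos _ _ (by positivity),
      Measure.addHaar_closedBall _ _ (by positivity), ← mul_assoc,
      ← ENNReal.ofReal_mul (by positivity), ← mul_pow]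
    congr 3
    field_simp
  refine ENNReal.div_le_of_le_mul ?_
  calc μ (S ∩ closedBall x (2 * r))
      ≤ μ (closedBall x (2 * r) \ ball y (η * r)) :=
        measure_mono fun a ⟨haS, hax⟩ => ⟨hax, fun hay => hdisj.notMem_of_mem_left hay haS⟩
    _ = μ (closedBall x (2 * r)) - μ (ball y (η * r)) :=
        measure_sdiff hsub measurableSet_ball.nullMeasurableSet measure_ball_lt_top.ne
    _ = (1 - ENNReal.ofReal ((η / 2) ^ finrank ℝ E)) * μ (closedBall x (2 * r)) := by
        rw [ENNReal.sub_mul fun _ _ => measure_closedBall_lt_top.ne, one_mul, hratio]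

lemma IsPorousAt.not_tendsto_density {S : Set E} {x : E} (hS : IsPorousAt S x) :
    ¬ Tendsto (fun r => μ (S ∩ closedBall x r) / μ (closedBall x r)) (𝓝[>] 0) (𝓝 1) := by
  intro hdensity
  obtain ⟨η, hη, hfreq⟩ := hS
  have hη' : 0 < min η 1 := lt_min hη one_pos
  have hdouble : Tendsto (fun r : ℝ => 2 * r) (𝓝[>] 0) (𝓝[>] 0) := by
    refine tendsto_nhdsWithin_iff.2 ⟨?_, ?_⟩
    · simpa using! ((continuous_const_mul (2 : ℝ)).tendsto 0).mono_left nhdsWithin_le_nhds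
    · filter_upwards [self_mem_nhdsWithin] with r (hr : 0 < r)
      exact mul_pos two_pos hr
  have hlt : 1 - ENNReal.ofReal ((min η 1 / 2) ^ finrank ℝ E) < 1 :=
    ENNReal.sub_lt_self ENNReal.one_ne_top one_ne_zero (by simpa using! by positivity)
  obtain ⟨r, ⟨y, hy, hdisj⟩, hgt, hr⟩ := (hfreq.and_eventually
    (((hdensity.comp hdouble).eventually_const_lt hlt).and self_mem_nhdsWithin)).exists
  have hr : 0 < r := hr
  refine hgt.not_ge (measure_inter_closedBall_div_le μ hη' (min_le_right _ _) hr hy ?_)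
  exact hdisj.mono_left (ball_subset_ball (by gcongr; exact min_le_left _ _))

lemma measure_eq_zero_of_forall_isPorousAt {S : Set E} (hS : ∀ x ∈ S, IsPorousAt S x) :
    μ S = 0 := by
  have hae : ∀ᵐ x ∂μ.restrict S, x ∉ S :=
    (Besicovitch.ae_tendsto_measure_inter_div μ S).mono fun x hx hxS =>
      (hS x hxS).not_tendsto_density μ hx
  rw [← Measure.restrict_apply_self μ S]
  simpa [ae_iff] using hae

end PorousMeasure

section Divergence

variable {E : Type*} [NormedAddCommGroup E] [NormedSpace ℝ E] [FiniteDimensional ℝ E]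
  [MeasurableSpace E] [BorelSpace E] {μ : Measure E} [μ.IsAddHaarMeasure] {w : E → ℝ} {K : NNReal}

lemma integrable_fderiv_apply_of_lipschitzWith (hw : LipschitzWith K w)
    (hsupp : HasCompactSupport w) {V : E → E} (hV : Continuous V) :
    Integrable (fun y => fderiv ℝ w y (V y)) μ := by
  obtain ⟨R, hR⟩ := hsupp.isCompact.exists_bound_of_continuousOn hV.continuousOn
  refine (integrableOn_iff_integrable_of_support_subset (s := tsupport w) ?_).1 ?_
  · intro y hy
    exact support_fderiv_subset ℝ fun h => hy (by simp [h])
  refine IntegrableOn.of_bound hsupp.isCompact.measure_lt_top ?_ (K * R) ?_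
  · exact (ContinuousLinearMap.measurable_apply₂.comp
      ((measurable_fderiv ℝ w).prodMk hV.measurable)).aestronglyMeasurable
  · refine (ae_restrict_iff' (isClosed_tsupport w).measurableSet).2 (.of_forall fun y hy => ?_)
    exact (fderiv ℝ w y).le_of_opNorm_le_of_le (norm_fderiv_le_of_lipschitz ℝ hw) (hR y hy)

lemma integral_fderiv_apply_clm_smul (hw : LipschitzWith K w) (hsupp : HasCompactSupport w)
    (φ : E →L[ℝ] ℝ) (z e : E) :
    ∫ y, fderiv ℝ w y (φ (y - z) • e) ∂μ = -(φ e * ∫ y, w y ∂μ) := by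
  have hφ : LipschitzWith ‖φ‖₊ fun y => φ (y - z) := by
    simpa [Function.comp_def] using φ.lipschitz.comp (LipschitzWith.id.sub (LipschitzWith.const z))
  have hderiv (y : E) : lineDeriv ℝ (fun y => φ (y - z)) y e = φ e := by
    simp only [map_sub]
    exact ((φ.hasFDerivAt.sub_const (φ z)).hasLineDerivAt e).lineDeriv
  have hparts := LipschitzWith.integral_lineDeriv_mul_eq (μ := μ) hφ hw hsupp e
  simp only [hderiv, lineDeriv_neg, neg_mul, integral_neg, integral_const_mul] at hparts
  rw [hparts, neg_neg]
  refine integral_congr_ae ?_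
  filter_upwards [hw.ae_differentiableAt] with y hy
  rw [map_smul, smul_eq_mul, mul_comm, hy.lineDeriv_eq_fderiv]

lemma integral_fderiv_apply_sub (hw : LipschitzWith K w) (hsupp : HasCompactSupport w) (z : E) :
    ∫ y, fderiv ℝ w y (y - z) ∂μ = -(finrank ℝ E * ∫ y, w y ∂μ) := by
  let b := finBasis ℝ E
  let φ (i : Fin (finrank ℝ E)) : E →L[ℝ] ℝ := (b.coord i).toContinuousLinearMap
  have hsum (y : E) : fderiv ℝ w y (y - z) = ∑ i, fderiv ℝ w y (φ i (y - z) • b i) := by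
    rw [← map_sum]
    exact congrArg (fderiv ℝ w y) (b.sum_repr (y - z)).symm
  have hint (i) : Integrable (fun y => fderiv ℝ w y (φ i (y - z) • b i)) μ :=
    integrable_fderiv_apply_of_lipschitzWith hw hsupp (by fun_prop)
  have hdual (i) : φ i (b i) = 1 := by simp [φ]
  simp_rw [hsum]
  rw [integral_finsetSum _ fun i _ => hint i]
  simp_rw [integral_fderiv_apply_clm_smul hw hsupp, hdual]
  simp

end Divergence

section Gradient

variable {E : Type*} [NormedAddCommGroup E] [InnerProductSpace ℝ E]

lemma norm_rpow_div_add_inner_le {p : ℝ} (hp : 1 < p) (g h : E) :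
    ‖h‖ ^ p / p + ‖h‖ ^ (p - 2) * ⟪h, g - h⟫_ℝ ≤ ‖g‖ ^ p / p := by
  have hpq := Real.HolderConjugate.conjExponent hp
  rcases eq_or_ne h 0 with rfl | hh
  · simp [Real.zero_rpow hpq.ne_zero, hpq.nonneg, div_nonneg, Real.rpow_nonneg]
  have hh : 0 < ‖h‖ := norm_pos_iff.2 hh
  have hyoung := Real.young_inequality_of_nonneg (norm_nonneg g)
    (Real.rpow_nonneg hh.le (p - 1)) hpq
  have hconj : ‖h‖ ^ p / p + ‖h‖ ^ p / Real.conjExponent p = ‖h‖ ^ p := by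
    rw [div_eq_mul_inv, div_eq_mul_inv, ← mul_add, hpq.inv_add_inv_eq_one, mul_one]
  have hcs : ‖h‖ ^ (p - 2) * ⟪h, g⟫_ℝ ≤ ‖g‖ * ‖h‖ ^ (p - 1) :=
    calc ‖h‖ ^ (p - 2) * ⟪h, g⟫_ℝ ≤ ‖h‖ ^ (p - 2) * (‖h‖ * ‖g‖) := by
          gcongr; exact real_inner_le_norm h g
      _ = ‖g‖ * ‖h‖ ^ (p - 1) := by
          rw [show p - 1 = p - 2 + 1 by ring, Real.rpow_add_one hh.ne']; ring
  have hself : ‖h‖ ^ (p - 2) * ⟪h, h⟫_ℝ = ‖h‖ ^ p := by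
    rw [real_inner_self_eq_norm_sq, ← Real.rpow_natCast, ← Real.rpow_add hh]
    norm_num
  rw [← Real.rpow_mul hh.le, hpq.sub_one_mul_conj] at hyoung
  rw [inner_sub_right, mul_sub, hself]
  linarith

lemma norm_rpow_smul_eq_of_holderConjugate {p q B : ℝ} (hpq : p.HolderConjugate q) (hB : 0 < B)
    (x : E) :
    ‖(B * ‖x‖ ^ (q - 2)) • x‖ ^ (p - 2) • (B * ‖x‖ ^ (q - 2)) • x = B ^ (p - 1) • x := by
  rcases eq_or_ne x 0 with rfl | hx
  · simp
  have hx : 0 < ‖x‖ := norm_pos_iff.2 hx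
  have hnorm : ‖(B * ‖x‖ ^ (q - 2)) • x‖ = B * ‖x‖ ^ (q - 1) := by
    rw [norm_smul, Real.norm_of_nonneg (by positivity), mul_assoc, ← Real.rpow_add_one hx.ne']
    ring_nf
  have hexp : (q - 1) * (p - 2) + (q - 2) = 0 := by linarith [hpq.mul_eq_add]
  rw [hnorm, smul_smul, Real.mul_rpow hB.le (by positivity), ← Real.rpow_mul hx.le]
  congr 1
  calc B ^ (p - 2) * ‖x‖ ^ ((q - 1) * (p - 2)) * (B * ‖x‖ ^ (q - 2))
      = B ^ (p - 2) * B * (‖x‖ ^ ((q - 1) * (p - 2)) * ‖x‖ ^ (q - 2)) := by ring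
    _ = B ^ (p - 1) := by
        rw [← Real.rpow_add hx, hexp, Real.rpow_zero, mul_one, ← Real.rpow_add_one hB.ne']
        ring_nf

lemma fderiv_max_zero_eq_zero {f : E → ℝ} {y : E} (hy : f y ≤ 0) :
    fderiv ℝ (fun x => max (f x) 0) y = 0 :=
  IsLocalMin.fderiv_eq_zero <| .of_forall fun x => by simp [hy]

variable [CompleteSpace E]

lemma norm_gradient (f : E → ℝ) (x : E) : ‖gradient f x‖ = ‖fderiv ℝ f x‖ := by
  simp [gradient]

lemma norm_gradient_le_of_eventually_le {f g : E → ℝ} {y : E} (hg : DifferentiableAt ℝ g y)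
    (hle : ∀ᶠ x in 𝓝 y, f x ≤ g x) (heq : f y = g y) : ‖gradient f y‖ ≤ ‖gradient g y‖ := by
  by_cases hf : DifferentiableAt ℝ f y
  · have hmin : IsLocalMin (fun x => g x - f x) y := by
      filter_upwards [hle] with x hx
      linarith
    have hzero := hmin.fderiv_eq_zero
    rw [fderiv_fun_sub hg hf, sub_eq_zero] at hzero
    rw [norm_gradient, norm_gradient, hzero]
  · simp [gradient_eq_zero_of_not_differentiableAt hf]

lemma norm_gradient_min_rpow_add_le {p : ℝ} (hp : 1 < p) {u P : E → ℝ} {y h : E}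
    (hu : DifferentiableAt ℝ u y) (hP : HasGradientAt P h y) :
    ‖gradient (fun x => min (u x) (P x)) y‖ ^ p / p +
        ‖h‖ ^ (p - 2) * fderiv ℝ (fun x => max (u x - P x) 0) y h ≤ ‖gradient u y‖ ^ p / p := by
  rcases le_or_gt (u y) (P y) with hle | hgt
  · rw [fderiv_max_zero_eq_zero (f := fun x => u x - P x) (sub_nonpos.2 hle),
      zero_apply, mul_zero, add_zero]
    have := norm_gradient_le_of_eventually_le hu (.of_forall fun x => min_le_left (u x) (P x))
      (min_eq_left hle)
    gcongr
  · have hnear : ∀ᶠ x in 𝓝 y, P x < u x :=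
      hP.differentiableAt.continuousAt.eventually_lt hu.continuousAt hgt
    have hmin : gradient (fun x => min (u x) (P x)) y = h :=
      (hP.congr_of_eventuallyEq (hnear.mono fun x hx => min_eq_right hx.le)).gradient
    have hmax : fderiv ℝ (fun x => max (u x - P x) 0) y h = ⟪h, gradient u y - h⟫_ℝ := by
      have hsub : (fun x => max (u x - P x) 0) =ᶠ[𝓝 y] fun x => u x - P x :=
        hnear.mono fun x hx => max_eq_left (sub_nonneg.2 hx.le)
      rw [hsub.fderiv_eq, fderiv_fun_sub hu hP.differentiableAt, sub_apply, hP.fderiv_apply,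
        ← inner_gradient_left, real_inner_comm, inner_sub_right]
    rw [hmin, hmax]
    exact norm_rpow_div_add_inner_le hp _ _

end Gradient

section Barrier

variable {E : Type*} [NormedAddCommGroup E]

/-- The radial barrier `A |y - z| ^ q`, frozen at its boundary value outside the ball of radius `r`
so that it is globally Lipschitz. -/
noncomputable def cappedBarrier (A q r : ℝ) (z y : E) : ℝ :=
  A * min ‖y - z‖ r ^ q

variable {A q r : ℝ} {y z : E}

lemma cappedBarrier_nonneg (hA : 0 ≤ A) (hr : 0 ≤ r) : 0 ≤ cappedBarrier A q r z y :=
  mul_nonneg hA (Real.rpow_nonneg (le_min (norm_nonneg _) hr) q)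

lemma cappedBarrier_self (hr : 0 ≤ r) (hq : q ≠ 0) : cappedBarrier A q r z z = 0 := by
  simp [cappedBarrier, hr, Real.zero_rpow hq]

lemma cappedBarrier_of_notMem_ball (hy : y ∉ ball z r) : cappedBarrier A q r z y = A * r ^ q := by
  rw [mem_ball_iff_norm, not_lt] at hy
  rw [cappedBarrier, min_eq_right hy]

lemma exists_lipschitzWith_cappedBarrier (A : ℝ) (hq : 1 ≤ q) (hr : 0 ≤ r) (z : E) :
    ∃ K, LipschitzWith K (cappedBarrier A q r z) := by
  obtain ⟨K, hK⟩ := ((Real.contDiff_rpow_const_of_le (n := 1) (mod_cast hq)).const_smul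
    A).contDiffOn.exists_lipschitzOnWith one_ne_zero (convex_Icc 0 r) isCompact_Icc
  have hmin : LipschitzWith 1 fun y : E => min ‖y - z‖ r := by
    simpa [dist_eq_norm] using (LipschitzWith.dist_left z).min_const r
  exact ⟨_, lipschitzOnWith_univ.1 <| hK.comp hmin.lipschitzOnWith
    fun y _ => ⟨le_min (norm_nonneg _) hr, min_le_right _ _⟩⟩

lemma sub_cappedBarrier_nonpos {U : E → ℝ} (hUM : ∀ y, U y ≤ A * r ^ q) (hy : y ∉ ball z r) :
    U y - cappedBarrier A q r z y ≤ 0 := by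
  rw [cappedBarrier_of_notMem_ball hy]
  exact sub_nonpos.2 (hUM y)

lemma hasCompactSupport_max_sub_cappedBarrier [ProperSpace E] {U : E → ℝ}
    (hUM : ∀ y, U y ≤ A * r ^ q) :
    HasCompactSupport fun y => max (U y - cappedBarrier A q r z y) 0 :=
  .intro (isCompact_closedBall z r) fun _ hy =>
    max_eq_right (sub_cappedBarrier_nonpos hUM fun h => hy (ball_subset_closedBall h))

lemma hasGradientAt_cappedBarrier {E : Type*} [NormedAddCommGroup E] [InnerProductSpace ℝ E]
    [CompleteSpace E] {y z : E} (hq : 1 < q) (hy : y ∈ ball z r) :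
    HasGradientAt (cappedBarrier A q r z) ((A * q * ‖y - z‖ ^ (q - 2)) • (y - z)) y := by
  have hpow : HasFDerivAt (fun x => A * ‖x - z‖ ^ q)
      (A • ((q * ‖y - z‖ ^ (q - 2)) • innerSL ℝ (y - z))) y := by
    simpa using! ((hasFDerivAt_norm_rpow (y - z) hq).comp y
      ((hasFDerivAt_id y).sub_const z)).const_mul A
  have hnear : cappedBarrier A q r z =ᶠ[𝓝 y] fun x => A * ‖x - z‖ ^ q := by
    filter_upwards [isOpen_ball.mem_nhds hy] with x hx
    rw [cappedBarrier, min_eq_left (mem_ball_iff_norm.1 hx).le]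
  have hdual : InnerProductSpace.toDual ℝ E ((A * q * ‖y - z‖ ^ (q - 2)) • (y - z)) =
      A • ((q * ‖y - z‖ ^ (q - 2)) • innerSL ℝ (y - z)) := by
    ext v
    simp [mul_assoc]
  rw [hasGradientAt_iff_hasFDerivAt, hdual]
  exact hpow.congr_of_eventuallyEq hnear

end Barrier

section Energy

variable {E : Type*} [NormedAddCommGroup E] [InnerProductSpace ℝ E] [CompleteSpace E]

/-- The density `|∇v| ^ p / p + F(v)` of the Alt–Phillips functional. -/
noncomputable def energyDensity (p : ℝ) (F : ℝ → ℝ) (v : E → ℝ) (x : E) : ℝ :=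
  ‖gradient v x‖ ^ p / p + F (v x)

variable {p : ℝ} {F : ℝ → ℝ}

lemma energyDensity_eqOn {s : Set E} {u v : E → ℝ} (hs : IsOpen s) (huv : EqOn u v s) :
    EqOn (energyDensity p F u) (energyDensity p F v) s := fun x hx => by
  rw [energyDensity, energyDensity, (huv.eventuallyEq_of_mem (hs.mem_nhds hx)).gradient_eq, huv hx]

lemma exists_lipschitzWith_le_eqOn {s : Set E} (hs : IsCompact s) (hconv : Convex ℝ s)
    {u : E → ℝ} {M : ℝ} (hu : ∀ x ∈ s, DifferentiableAt ℝ u x) (hgrad : ContinuousOn (gradient u) s)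
    (huM : ∀ x ∈ s, u x ≤ M) :
    ∃ (K : NNReal) (U : E → ℝ), LipschitzWith K U ∧ (∀ x, U x ≤ M) ∧ EqOn U u s := by
  obtain ⟨K, hK⟩ := hs.exists_bound_of_continuousOn hgrad
  have hlip : LipschitzOnWith K.toNNReal u s := by
    refine hconv.lipschitzOnWith_of_nnnorm_fderiv_le hu fun x hx => ?_
    rw [← NNReal.coe_le_coe, coe_nnnorm, ← norm_gradient]
    exact (hK x hx).trans K.le_coe_toNNReal
  obtain ⟨U, hU, hUu⟩ := hlip.extend_real
  exact ⟨K.toNNReal, fun x => min (U x) M, hU.min_const M, fun x => min_le_right _ _,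
    fun x hx => (min_eq_left (hUu hx ▸ huM x hx)).trans (hUu hx).symm⟩

variable {q A r κ : ℝ} {z : E} {U : E → ℝ} {K : NNReal}

-- Since `1/p + 1/q = 1`, the field `|∇P|^(p-2) ∇P` of `P = A |y - z|^q` is the linear one
-- `(A q)^(p-1) (y - z)`, whose divergence is constant.
lemma energyDensity_min_cappedBarrier_add_le (hpq : p.HolderConjugate q) (hA : 0 < A) (hr : 0 ≤ r)
    (hF : ∀ a b, a ≤ A * r ^ q → 0 ≤ b → F (min a b) + κ * max (a - b) 0 ≤ F a)
    {y : E} (hy : y ∈ ball z r) (hU : DifferentiableAt ℝ U y) (hUM : U y ≤ A * r ^ q) :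
    energyDensity p F (fun x => min (U x) (cappedBarrier A q r z x)) y +
        ((A * q) ^ (p - 1) * fderiv ℝ (fun x => max (U x - cappedBarrier A q r z x) 0) y (y - z) +
          κ * max (U y - cappedBarrier A q r z y) 0) ≤ energyDensity p F U y := by
  have hgrad := norm_gradient_min_rpow_add_le hpq.lt hU
    (hasGradientAt_cappedBarrier (A := A) hpq.symm.lt hy)
  rw [← smul_eq_mul (_ ^ (p - 2)), ← map_smul,
    norm_rpow_smul_eq_of_holderConjugate hpq (mul_pos hA hpq.symm.pos), map_smul, smul_eq_mul]
    at hgrad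
  have hpot := hF (U y) _ hUM (cappedBarrier_nonneg (q := q) (y := y) (z := z) hA.le hr)
  simp only [energyDensity]
  linarith

variable [FiniteDimensional ℝ E] [MeasurableSpace E] [BorelSpace E] {μ : Measure E}
  [μ.IsAddHaarMeasure]

lemma integrableOn_energyDensity_of_lipschitzWith (hp : 0 ≤ p) (hF : Continuous F) {v : E → ℝ}
    {K : NNReal} (hv : LipschitzWith K v) (z : E) (r : ℝ) :
    IntegrableOn (energyDensity p F v) (ball z r) μ := by
  refine Integrable.add ?_ ?_
  · refine IntegrableOn.of_bound measure_ball_lt_top ?_ ((K : ℝ) ^ p / p) (.of_forall fun y => ?_)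
    · simp only [norm_gradient]
      exact ((measurable_fderiv ℝ v).norm.pow_const p).div_const p |>.aestronglyMeasurable
    · rw [Real.norm_of_nonneg (by positivity), norm_gradient]
      gcongr
      exact norm_fderiv_le_of_lipschitz ℝ hv
  · exact ((hF.comp hv.continuous).continuousOn.integrableOn_compact
      (isCompact_closedBall z r)).mono_set ball_subset_closedBall

lemma setIntegral_energyDensity_min_cappedBarrier_add_le (hpq : p.HolderConjugate q) (hA : 0 < A)
    (hr : 0 ≤ r) (hFcont : Continuous F)
    (hF : ∀ a b, a ≤ A * r ^ q → 0 ≤ b → F (min a b) + κ * max (a - b) 0 ≤ F a)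
    (hU : LipschitzWith K U) (hUM : ∀ y, U y ≤ A * r ^ q) :
    ∫ y in ball z r, energyDensity p F (fun x => min (U x) (cappedBarrier A q r z x)) y ∂μ +
        (κ - finrank ℝ E * (A * q) ^ (p - 1)) * ∫ y, max (U y - cappedBarrier A q r z y) 0 ∂μ ≤
      ∫ y in ball z r, energyDensity p F U y ∂μ := by
  obtain ⟨L, hP⟩ := exists_lipschitzWith_cappedBarrier A hpq.symm.lt.le hr z
  set w : E → ℝ := fun y => max (U y - cappedBarrier A q r z y) 0 with hw_def
  have hw : LipschitzWith (K + L) w := (hU.sub hP).max_const 0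
  have hsupp : HasCompactSupport w := hasCompactSupport_max_sub_cappedBarrier hUM
  have hflux_int : Integrable (fun y => fderiv ℝ w y (y - z)) μ :=
    integrable_fderiv_apply_of_lipschitzWith hw hsupp (by fun_prop)
  have hw_int : Integrable w μ := hw.continuous.integrable_of_hasCompactSupport hsupp
  have hflux : ∫ y in ball z r, fderiv ℝ w y (y - z) ∂μ = -(finrank ℝ E * ∫ y, w y ∂μ) := by
    rw [← integral_fderiv_apply_sub hw hsupp z]
    refine setIntegral_eq_integral_of_forall_compl_eq_zero fun y hy => ?_
    rw [hw_def, fderiv_max_zero_eq_zero (f := fun x => U x - _) (sub_cappedBarrier_nonpos hUM hy),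
      zero_apply]
  have hw_ball : ∫ y in ball z r, w y ∂μ = ∫ y, w y ∂μ :=
    setIntegral_eq_integral_of_forall_compl_eq_zero fun y hy =>
      max_eq_right (sub_cappedBarrier_nonpos hUM hy)
  have hv_int := integrableOn_energyDensity_of_lipschitzWith (μ := μ) hpq.nonneg hFcont
    (hU.min hP) z r
  have hadd_int := (hflux_int.integrableOn (s := ball z r)).const_mul ((A * q) ^ (p - 1))
    |>.add (hw_int.integrableOn.const_mul κ)
  have hmono := setIntegral_mono_on_ae (hv_int.add hadd_int)
    (integrableOn_energyDensity_of_lipschitzWith hpq.nonneg hFcont hU z r) measurableSet_ball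
    (hU.ae_differentiableAt.mono fun y hUy hy =>
      energyDensity_min_cappedBarrier_add_le hpq hA hr hF hy hUy (hUM y))
  rw [integral_add' hv_int hadd_int, integral_add' (hflux_int.integrableOn.const_mul _)
    (hw_int.integrableOn.const_mul _), integral_const_mul, integral_const_mul, hflux,
    hw_ball] at hmono
  linarith

end Energy

section Potential

variable {γ lp lm : ℝ}

lemma continuous_Fgam (hγ : 0 ≤ γ) : Continuous (Fgam γ lp lm) := by
  unfold Fgam
  fun_prop (disch := exact fun _ => Or.inr hγ)

lemma Fgam_neg (t : ℝ) : Fgam γ lm lp (-t) = Fgam γ lp lm t := by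
  rw [Fgam, Fgam, neg_neg, add_comm]

lemma rpow_le_rpow_add_mul_sub {a b : ℝ} (hγ0 : 0 ≤ γ) (hγ1 : γ ≤ 1) (ha : 0 < a) (hb : 0 ≤ b) :
    b ^ γ ≤ a ^ γ + γ * a ^ (γ - 1) * (b - a) := by
  have hbernoulli : (b / a) ^ γ ≤ 1 + γ * (b / a - 1) := by
    simpa using rpow_one_add_le_one_add_mul_self (s := b / a - 1)
      (by linarith [div_nonneg hb ha.le]) hγ0 hγ1
  calc b ^ γ = (b / a) ^ γ * a ^ γ := by
        rw [← Real.mul_rpow (by positivity) ha.le, div_mul_cancel₀ _ ha.ne']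
    _ ≤ (1 + γ * (b / a - 1)) * a ^ γ := by gcongr
    _ = a ^ γ + γ * a ^ (γ - 1) * (b - a) := by
        rw [Real.rpow_sub_one ha.ne']
        field_simp

lemma Fgam_min_add_le {a b M : ℝ} (hγ0 : 0 ≤ γ) (hγ1 : γ ≤ 1) (hlp : 0 ≤ lp) (haM : a ≤ M)
    (hb : 0 ≤ b) :
    Fgam γ lp lm (min a b) + lp * γ * M ^ (γ - 1) * max (a - b) 0 ≤ Fgam γ lp lm a := by
  rcases le_or_gt a b with hab | hba
  · simp [hab]
  have ha : 0 < a := hb.trans_lt hba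
  have hslope : M ^ (γ - 1) ≤ a ^ (γ - 1) :=
    Real.rpow_le_rpow_of_nonpos ha haM (sub_nonpos.2 hγ1)
  have htangent : b ^ γ + γ * M ^ (γ - 1) * (a - b) ≤ a ^ γ :=
    calc b ^ γ + γ * M ^ (γ - 1) * (a - b)
        ≤ b ^ γ + γ * a ^ (γ - 1) * (a - b) := by have := sub_nonneg.2 hba.le; gcongr
      _ ≤ a ^ γ := by linarith [rpow_le_rpow_add_mul_sub hγ0 hγ1 ha hb]
  rw [min_eq_right hba.le, max_eq_left (sub_nonneg.2 hba.le), Fgam, Fgam, max_eq_left hb,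
    max_eq_left ha.le, max_eq_right (neg_nonpos.2 hb), max_eq_right (neg_nonpos.2 ha.le)]
  linarith [mul_le_mul_of_nonneg_left htangent hlp]

end Potential

section Nondegeneracy

variable {N : ℕ} {p q γ lp lm : ℝ} {F : ℝ → ℝ} {Ω : Set (EuclideanSpace ℝ (Fin N))}
  {u : EuclideanSpace ℝ (Fin N) → ℝ} {z : EuclideanSpace ℝ (Fin N)} {r M κ : ℝ}

lemma APLocMin.neg (hu : APLocMin N p (Fgam γ lp lm) Ω u) :
    APLocMin N p (Fgam γ lm lp) Ω (fun x => -u x) := by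
  have hgrad (f : EuclideanSpace ℝ (Fin N) → ℝ) (x) :
      gradient (fun x => -f x) x = -gradient f x := by
    simp [gradient]
  obtain ⟨hdiff, hcont, hint, hmin⟩ := hu
  refine ⟨fun x hx => (hdiff x hx).neg, ?_, ?_, fun z r hr hball v K hv hvu => ?_⟩
  · simp only [hgrad]
    exact hcont.neg
  · simpa only [hgrad, norm_neg] using hint
  · simpa only [hgrad, norm_neg, Fgam_neg] using
      hmin z r hr hball (fun x => -v x) K hv.neg fun x hx => by simp [hvu hx]

lemma APLocMin.setIntegral_energyDensity_le (hu : APLocMin N p F Ω u) (hr : 0 < r)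
    (hball : closedBall z r ⊆ Ω) {v : EuclideanSpace ℝ (Fin N) → ℝ} {K : NNReal}
    (hv : LipschitzWith K v) (hvu : EqOn v u (sphere z r)) :
    ∫ x in ball z r, energyDensity p F u x ≤ ∫ x in ball z r, energyDensity p F v x :=
  hu.2.2.2 z r hr ((closure_ball z hr.ne').trans_subset hball) v K hv.lipschitzOnWith hvu

lemma APLocMin.nonpos_of_le_of_lt (hpq : p.HolderConjugate q) (hFcont : Continuous F)
    (hF : ∀ a b, a ≤ M → 0 ≤ b → F (min a b) + κ * max (a - b) 0 ≤ F a)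
    (hu : APLocMin N p F Ω u) (hr : 0 < r) (hM : 0 < M) (hball : closedBall z r ⊆ Ω)
    (huM : ∀ y ∈ closedBall z r, u y ≤ M) (hκ : N * (M / r ^ q * q) ^ (p - 1) < κ) : u z ≤ 0 := by
  have hAr : M / r ^ q * r ^ q = M := div_mul_cancel₀ _ (Real.rpow_pos_of_pos hr q).ne'
  have hq : 1 < q := hpq.symm.lt
  set P := cappedBarrier (M / r ^ q) q r z
  obtain ⟨K, U, hU, hUM, hUu⟩ := exists_lipschitzWith_le_eqOn (isCompact_closedBall z r)
    (convex_closedBall z r) (fun x hx => hu.1 x (hball hx)) (hu.2.1.mono hball) huM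
  obtain ⟨L, hP⟩ := exists_lipschitzWith_cappedBarrier (M / r ^ q) hq.le hr.le z
  have hsphere : EqOn (fun y => min (U y) (P y)) u (sphere z r) := fun y hy => by
    have hPy : P y = M := (cappedBarrier_of_notMem_ball (by simp [mem_sphere.1 hy])).trans hAr
    simpa [hPy, hUM] using hUu (sphere_subset_closedBall hy)
  have hmin := hu.setIntegral_energyDensity_le hr hball (hU.min hP) hsphere
  have hgain := setIntegral_energyDensity_min_cappedBarrier_add_le (μ := volume) (z := z) hpq
    (show 0 < M / r ^ q by positivity) hr.le hFcont (by rwa [hAr]) hU (by rwa [hAr])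
  rw [setIntegral_congr_fun measurableSet_ball
    (energyDensity_eqOn isOpen_ball (hUu.mono ball_subset_closedBall)),
    finrank_euclideanSpace_fin] at hgain
  have hint : ∫ y, max (U y - P y) 0 ≤ 0 := by nlinarith
  by_contra! hz
  have hPz : P z = 0 := cappedBarrier_self hr.le (by positivity)
  have hUz : U z = u z := hUu (mem_closedBall_self hr.le)
  refine hint.not_gt (Continuous.integral_pos_of_hasCompactSupport_nonneg_nonzero (x := z)
    ((hU.continuous.sub hP.continuous).max continuous_const)
    (hasCompactSupport_max_sub_cappedBarrier (by rwa [hAr])) (fun y => le_max_right _ _) ?_)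
  simpa [hPz, hUz] using hz

lemma mul_barrier_rpow_lt_of_lt {n : ℝ} (hpq : p.HolderConjugate q) (hM : 0 < M) (hr : 0 < r)
    (h : n * q ^ (p - 1) * M ^ (p - γ) < lp * γ * r ^ p) :
    n * (M / r ^ q * q) ^ (p - 1) < lp * γ * M ^ (γ - 1) := by
  have hq := hpq.symm.pos
  calc n * (M / r ^ q * q) ^ (p - 1)
      = n * q ^ (p - 1) * M ^ (p - γ) * M ^ (γ - 1) / r ^ p := by
        rw [Real.mul_rpow (by positivity) hq.le, Real.div_rpow hM.le (by positivity),
          ← Real.rpow_mul hr.le, mul_comm q, hpq.sub_one_mul_conj, mul_assoc _ (M ^ _),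
          ← Real.rpow_add hM, show p - γ + (γ - 1) = p - 1 by ring]
        ring
    _ < lp * γ * r ^ p * M ^ (γ - 1) / r ^ p := by gcongr
    _ = lp * γ * M ^ (γ - 1) := by field_simp

lemma APLocMin.nonpos_of_le (hpq : p.HolderConjugate q) (hγ0 : 0 ≤ γ) (hγ1 : γ ≤ 1) (hlp : 0 ≤ lp)
    (hu : APLocMin N p (Fgam γ lp lm) Ω u) (hr : 0 < r) (hM : 0 < M) (hball : closedBall z r ⊆ Ω)
    (huM : ∀ y ∈ closedBall z r, u y ≤ M)
    (hsmall : N * q ^ (p - 1) * M ^ (p - γ) < lp * γ * r ^ p) : u z ≤ 0 :=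
  hu.nonpos_of_le_of_lt hpq (continuous_Fgam hγ0)
    (fun _ _ haM hb => Fgam_min_add_le hγ0 hγ1 hlp haM hb) hr hM hball huM
    (mul_barrier_rpow_lt_of_lt hpq hM hr hsmall)

lemma APLocMin.exists_nondegeneracy_const (N : ℕ) (hp : 1 < p) (hγ0 : 0 < γ) (hγ1 : γ ≤ 1)
    (hlp : 0 < lp) (hlm : 0 < lm) :
    ∃ c > 0, ∀ {Ω : Set (EuclideanSpace ℝ (Fin N))} {u : EuclideanSpace ℝ (Fin N) → ℝ},
      APLocMin N p (Fgam γ lp lm) Ω u → ∀ {z r}, 0 < r → closedBall z r ⊆ Ω → u z ≠ 0 →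
        ∃ y ∈ closedBall z r, c * r ^ (1 + γ / (p - γ)) < |u y| := by
  have hpq := Real.HolderConjugate.conjExponent hp
  have hγp : 0 < p - γ := by linarith
  obtain ⟨c, hc, hsmall⟩ := exists_pos_mul_rpow_lt (N * p.conjExponent ^ (p - 1))
    (show 0 < min lp lm * γ by positivity) hγp
  refine ⟨c, hc, fun {Ω u} hu {z r} hr hball hz => ?_⟩
  by_contra! hle
  set M := c * r ^ (1 + γ / (p - γ))
  have hM : 0 < M := by positivity
  have hMpow : M ^ (p - γ) = c ^ (p - γ) * r ^ p := by
    rw [Real.mul_rpow hc.le (by positivity), ← Real.rpow_mul hr.le]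
    congr 2
    field_simp
    ring
  have hsmall' {l : ℝ} (hl : min lp lm ≤ l) :
      N * p.conjExponent ^ (p - 1) * M ^ (p - γ) < l * γ * r ^ p :=
    calc N * p.conjExponent ^ (p - 1) * M ^ (p - γ)
        = N * p.conjExponent ^ (p - 1) * c ^ (p - γ) * r ^ p := by rw [hMpow, mul_assoc _ (c ^ _)]
      _ < min lp lm * γ * r ^ p := by gcongr
      _ ≤ l * γ * r ^ p := by gcongr
  have hupper : u z ≤ 0 := hu.nonpos_of_le hpq hγ0.le hγ1 hlp.le hr hM hball
    (fun y hy => (le_abs_self _).trans (hle y hy)) (hsmall' (min_le_left _ _))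
  have hlower : -u z ≤ 0 := hu.neg.nonpos_of_le hpq hγ0.le hγ1 hlm.le hr hM hball
    (fun y hy => (neg_le_abs _).trans (hle y hy)) (hsmall' (min_le_right _ _))
  exact hz (le_antisymm hupper (neg_nonpos.1 hlower))

end Nondegeneracy

section FreeBoundary

lemma eq_zero_of_mem_frontier_setOf_pos {X : Type*} [TopologicalSpace X] {Ω : Set X} {u : X → ℝ}
    {x : X} (hΩ : Ω ∈ 𝓝 x) (hu : ContinuousAt u x) (hx : x ∈ frontier {y ∈ Ω | 0 < u y}) :
    u x = 0 := by
  rcases lt_trichotomy (u x) 0 with hneg | hzero | hpos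
  · obtain ⟨y, hy, hy'⟩ := mem_closure_iff_nhds.1 (frontier_subset_closure hx) _
      (hu.eventually_lt_const hneg)
    exact (lt_asymm hy hy'.2).elim
  · exact hzero
  · exact (hx.2 (mem_interior_iff_mem_nhds.2 (inter_mem hΩ (hu.eventually_const_lt hpos)))).elim

variable {N : ℕ} {p γ lp lm : ℝ} {Ω : Set (EuclideanSpace ℝ (Fin N))}
  {u : EuclideanSpace ℝ (Fin N) → ℝ} {x : EuclideanSpace ℝ (Fin N)}

lemma eq_zero_of_mem_apFB (hΩ : IsOpen Ω) (hu : ContinuousAt u x) (hx : x ∈ apFB N Ω u) :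
    u x = 0 := by
  obtain ⟨hpos | hneg, hxΩ⟩ := hx
  · exact eq_zero_of_mem_frontier_setOf_pos (hΩ.mem_nhds hxΩ) hu hpos
  · exact neg_eq_zero.1 <| eq_zero_of_mem_frontier_setOf_pos (u := fun y => -u y)
      (hΩ.mem_nhds hxΩ) hu.neg (by simpa only [neg_pos] using hneg)

lemma frequently_ne_zero_of_mem_apFB (hx : x ∈ apFB N Ω u) : ∃ᶠ y in 𝓝 x, u y ≠ 0 := by
  rcases hx.1 with hpos | hneg
  · exact (mem_closure_iff_frequently.1 (frontier_subset_closure hpos)).mono fun y hy => hy.2.ne'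
  · exact (mem_closure_iff_frequently.1 (frontier_subset_closure hneg)).mono fun y hy => hy.2.ne

lemma isPorousAt_apFB_of_gradient_ne_zero (hΩ : IsOpen Ω) (hu : ∀ y ∈ Ω, DifferentiableAt ℝ u y)
    (hx : x ∈ apFB N Ω u) (hgrad : gradient u x ≠ 0) : IsPorousAt (apFB N Ω u) x := by
  have hderiv : fderiv ℝ u x ≠ 0 := by rwa [← norm_ne_zero_iff, ← norm_gradient, norm_ne_zero_iff]
  refine (isPorousAt_levelSet_of_hasFDerivAt (hu x hx.2).hasFDerivAt hderiv).mono fun y hy => ?_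
  rw [mem_ofPred_eq, eq_zero_of_mem_apFB hΩ (hu x hx.2).continuousAt hx,
    eq_zero_of_mem_apFB hΩ (hu y hy.2).continuousAt hy]

lemma APLocMin.eventually_exists_lt_abs (hp : 1 < p) (hγ0 : 0 < γ) (hγ1 : γ ≤ 1) (hlp : 0 < lp)
    (hlm : 0 < lm) (hu : APLocMin N p (Fgam γ lp lm) Ω u) (hΩ : IsOpen Ω)
    (hx : x ∈ apFB N Ω u) :
    ∃ c > 0, ∀ᶠ r in 𝓝[>] (0 : ℝ), ∃ y ∈ closedBall x r, c * r ^ (1 + γ / (p - γ)) < |u y| := by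
  obtain ⟨c, hc, hnondeg⟩ := APLocMin.exists_nondegeneracy_const N hp hγ0 hγ1 hlp hlm
  obtain ⟨ε, hε, hball⟩ := Metric.isOpen_iff.1 hΩ x hx.2
  refine ⟨c * (1 / 2) ^ (1 + γ / (p - γ)), by positivity, ?_⟩
  filter_upwards [Ioo_mem_nhdsGT hε] with r ⟨hr, hrε⟩
  obtain ⟨z, huz, hzx⟩ := ((frequently_ne_zero_of_mem_apFB hx).and_eventually
    (ball_mem_nhds x (half_pos hr))).exists
  have hsub : closedBall z (r / 2) ⊆ closedBall x r :=
    closedBall_subset_closedBall' (by linarith [mem_ball.1 hzx])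
  obtain ⟨y, hy, hlarge⟩ := hnondeg hu (half_pos hr)
    (hsub.trans ((closedBall_subset_ball hrε).trans hball)) huz
  refine ⟨y, hsub hy, ?_⟩
  rwa [mul_assoc, ← Real.mul_rpow (by norm_num) hr.le, one_div_mul_eq_div]

lemma APLocMin.isPorousAt_apFB0 (hp : 1 < p) (hγ0 : 0 < γ) (hγ1 : γ ≤ 1) (hlp : 0 < lp)
    (hlm : 0 < lm) (hu : APLocMin N p (Fgam γ lp lm) Ω u) (hΩ : IsOpen Ω) {ρ₀ C₂ : ℝ}
    (hρ₀ : 0 < ρ₀) (hC₂ : 0 ≤ C₂)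
    (hgrowth : ∀ x ∈ Ω, infDist x (apFB0 N Ω u) < ρ₀ →
      |u x| ≤ C₂ * infDist x (apFB0 N Ω u) ^ (1 + γ / (p - γ)))
    (hx : x ∈ apFB0 N Ω u) : IsPorousAt (apFB0 N Ω u) x := by
  obtain ⟨c, hc, hnondeg⟩ := hu.eventually_exists_lt_abs hp hγ0 hγ1 hlp hlm hΩ hx.1
  have hγp : 0 < p - γ := by linarith
  refine isPorousAt_of_growth_of_nondegenerate (by positivity) hc hC₂ ?_ hnondeg
  filter_upwards [hΩ.mem_nhds hx.1.2, ball_mem_nhds x hρ₀] with y hyΩ hy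
  exact hgrowth y hyΩ ((infDist_le_dist_of_mem hx).trans_lt hy)

end FreeBoundary

theorem stmt15_general (N : ℕ) (p γ lp lm : ℝ)
    (hp : 1 < p) (hγ0 : 0 < γ) (hγ1 : γ ≤ 1) (hlp : 0 < lp) (hlm : 0 < lm)
    (Ω : Set (EuclideanSpace ℝ (Fin N))) (hΩo : IsOpen Ω)
    (u : EuclideanSpace ℝ (Fin N) → ℝ) (hu : APLocMin N p (Fgam γ lp lm) Ω u)
    (ρ₀ C₂ : ℝ) (hρ₀ : 0 < ρ₀) (hC₂ : 0 ≤ C₂)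
    (hgrowth : ∀ x ∈ Ω, infDist x (apFB0 N Ω u) < ρ₀ →
      |u x| ≤ C₂ * infDist x (apFB0 N Ω u) ^ (1 + γ / (p - γ))) :
    volume (apFB N Ω u) = 0 := by
  have hsingular : volume (apFB0 N Ω u) = 0 :=
    measure_eq_zero_of_forall_isPorousAt volume fun x =>
      hu.isPorousAt_apFB0 hp hγ0 hγ1 hlp hlm hΩo hρ₀ hC₂ hgrowth
  have hregular : volume (apFB N Ω u \ apFB0 N Ω u) = 0 :=
    measure_eq_zero_of_forall_isPorousAt volume fun x hx =>
      (isPorousAt_apFB_of_gradient_ne_zero hΩo hu.1 hx.1 fun hgrad => hx.2 ⟨hx.1, hgrad⟩).mono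
        sdiff_subset
  exact measure_mono_null (by rw [sdiff_union_self]; exact subset_union_left)
    (measure_union_null hregular hsingular)

/-- The full free boundary `Γ(u)` has vanishing `N`-dimensional Lebesgue measure
locally in `Ω`, assuming the optimal growth property with constant `C₂`. -/
theorem stmt15 (N : ℕ) (hN : 1 ≤ N) (p γ lp lm : ℝ)
    (hp : 1 < p) (hγ0 : 0 < γ) (hγ1 : γ ≤ 1) (hγp : γ < p)
    (hlp : 0 < lp) (hlm : 0 < lm)
    (Ω : Set (EuclideanSpace ℝ (Fin N))) (hΩo : IsOpen Ω) (hΩb : Bornology.IsBounded Ω)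
    (u : EuclideanSpace ℝ (Fin N) → ℝ) (hu : APLocMin N p (Fgam γ lp lm) Ω u)
    (Ω' : Set (EuclideanSpace ℝ (Fin N))) (hΩ' : Ω' ⊆ Ω)
    (d : ℝ) (hd : 0 < d) (hdist : ∀ x ∈ Ω', d ≤ Metric.infDist x (frontier Ω))
    (ρ₀ C₂ : ℝ) (hρ₀ : 0 < ρ₀) (hC₂ : 0 < C₂)
    (hgrowth : ∀ x ∈ Ω, Metric.infDist x (apFB0 N Ω u) < ρ₀ →
      |u x| ≤ C₂ * Metric.infDist x (apFB0 N Ω u) ^ (1 + γ / (p - γ))) :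
    volume (apFB N Ω u ∩ Ω') = 0 := by
  exact measure_mono_null inter_subset_left <|
    stmt15_general N p γ lp lm hp hγ0 hγ1 hlp hlm Ω hΩo u hu ρ₀ C₂ hρ₀ hC₂.le hgrowth
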